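/- Let a ~ N(0, I_n) be a standard Gaussian vector in ℝ^n, let s̄ ∈ ℝ^n be a unit vector, and let g = ⟨a, s̄⟩. Then for every bounded measurable function h : ℝ → ℝ and all indices i, j ∈ {1,…,n}: E[ h(g) · a_i a_j ] = E[h(g) g²] · s̄_i s̄_j + E[h(g)] · (δ_{ij} − s̄_i s̄_j), where δ_{ij} is the Kronecker delta. Equivalently, E[h(g) · a aᵀ] = E[h(g)] I_n + (E[h(g) g²] − E[h(g)]) s̄ s̄ᵀ. -/

import Mathlib

open MeasureTheory ProbabilityTheory Matrix

/-- The squared-sum Euclidean (ℓ₂) norm of a vector in `Fin d → ℝ`. -/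
noncomputable def l2norm {d : ℕ} (v : Fin d → ℝ) : ℝ := Real.sqrt (∑ i, (v i) ^ 2)

/-- The standard Gaussian measure `N(0, I_n)` on `ℝ^n`. -/
noncomputable def piGauss (n : ℕ) : Measure (Fin n → ℝ) :=
  Measure.pi fun _ : Fin n => gaussianReal 0 1

/-! With `K = ℝ ∙ s̄`, the parts of a standard Gaussian vector along `K` and `Kᗮ` are jointly
Gaussian and uncorrelated, hence independent. Splitting both linear factors of
`h (g) * a_i * a_j` along `K` and `Kᗮ`, the cross terms vanish because the part in `Kᗮ` is
centred, and the two pure terms are the two summands of the formula. -/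

open Submodule WithLp
open scoped RealInnerProductSpace

section Independence

variable {Ω : Type*} {mΩ : MeasurableSpace Ω} {P : Measure Ω}

lemma integral_mul_add_mul_add_of_indepFun {W A B C D : Ω → ℝ}
    (hindep : IndepFun (fun ω ↦ (W ω, A ω, B ω)) (fun ω ↦ (C ω, D ω)) P)
    (hW : Integrable W P) (hWA : Integrable (fun ω ↦ W ω * A ω) P)
    (hWB : Integrable (fun ω ↦ W ω * B ω) P) (hWAB : Integrable (fun ω ↦ W ω * (A ω * B ω)) P)
    (hC : Integrable C P) (hD : Integrable D P) (hCD : Integrable (fun ω ↦ C ω * D ω) P)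
    (hC_centred : ∫ ω, C ω ∂P = 0) (hD_centred : ∫ ω, D ω ∂P = 0) :
    ∫ ω, W ω * ((A ω + C ω) * (B ω + D ω)) ∂P =
      ∫ ω, W ω * (A ω * B ω) ∂P + (∫ ω, W ω ∂P) * ∫ ω, C ω * D ω ∂P := by
  have hindep_WA_D : IndepFun (fun ω ↦ W ω * A ω) D P :=
    hindep.comp (φ := fun p : ℝ × ℝ × ℝ ↦ p.1 * p.2.1) (by fun_prop) measurable_snd
  have hindep_WB_C : IndepFun (fun ω ↦ W ω * B ω) C P :=
    hindep.comp (φ := fun p : ℝ × ℝ × ℝ ↦ p.1 * p.2.2) (by fun_prop) measurable_fst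
  have hindep_W_CD : IndepFun W (fun ω ↦ C ω * D ω) P :=
    hindep.comp measurable_fst (measurable_fst.mul measurable_snd)
  have hWAD : ∫ ω, W ω * A ω * D ω ∂P = 0 := by
    rw [hindep_WA_D.integral_fun_mul_eq_mul_integral hWA.1 hD.1, hD_centred, mul_zero]
  have hWBC : ∫ ω, W ω * B ω * C ω ∂P = 0 := by
    rw [hindep_WB_C.integral_fun_mul_eq_mul_integral hWB.1 hC.1, hC_centred, mul_zero]
  have hexpand (ω : Ω) : W ω * ((A ω + C ω) * (B ω + D ω)) =
      W ω * (A ω * B ω) + W ω * A ω * D ω + W ω * B ω * C ω + W ω * (C ω * D ω) := by ring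
  have hWAD_int : Integrable (fun ω ↦ W ω * A ω * D ω) P := hindep_WA_D.integrable_mul hWA hD
  have hWBC_int : Integrable (fun ω ↦ W ω * B ω * C ω) P := hindep_WB_C.integrable_mul hWB hC
  have hWCD_int : Integrable (fun ω ↦ W ω * (C ω * D ω)) P := hindep_W_CD.integrable_mul hW hCD
  simp_rw [hexpand]
  rw [integral_add (by fun_prop) hWCD_int, integral_add (by fun_prop) hWBC_int,
    integral_add hWAB hWAD_int, hWAD, hWBC,
    hindep_W_CD.integral_fun_mul_eq_mul_integral hW.1 hCD.1, add_zero, add_zero]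

lemma integrable_mul_inner_of_integrable_mul_norm_sq {E : Type*} [NormedAddCommGroup E]
    [InnerProductSpace ℝ E] {W : Ω → ℝ} {Y : Ω → E} (hY : AEStronglyMeasurable Y P)
    (hW : Integrable W P) (hWY : Integrable (fun ω ↦ W ω * ‖Y ω‖ ^ 2) P) (u : E) :
    Integrable (fun ω ↦ W ω * ⟪u, Y ω⟫) P := by
  refine ((hW.norm.add hWY.norm).const_mul ‖u‖).mono'
    (hW.aestronglyMeasurable.mul (hY.const_inner)) (.of_forall fun ω ↦ ?_)
  have hle : ‖Y ω‖ ≤ 1 + ‖Y ω‖ ^ 2 := by nlinarith [sq_nonneg (‖Y ω‖ - 1), norm_nonneg (Y ω)]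
  calc ‖W ω * ⟪u, Y ω⟫‖ ≤ ‖W ω‖ * (‖u‖ * ‖Y ω‖) := by
        rw [norm_mul]; gcongr; exact norm_inner_le_norm u (Y ω)
    _ ≤ ‖W ω‖ * (‖u‖ * (1 + ‖Y ω‖ ^ 2)) := by gcongr
    _ = ‖u‖ * (‖W ω‖ + ‖W ω * ‖Y ω‖ ^ 2‖) := by simp only [norm_mul, norm_pow, norm_norm]; ring

lemma integrable_mul_inner_mul_inner_of_integrable_mul_norm_sq {E : Type*} [NormedAddCommGroup E]
    [InnerProductSpace ℝ E] {W : Ω → ℝ} {Y : Ω → E} (hY : AEStronglyMeasurable Y P)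
    (hW : AEStronglyMeasurable W P) (hWY : Integrable (fun ω ↦ W ω * ‖Y ω‖ ^ 2) P) (u v : E) :
    Integrable (fun ω ↦ W ω * (⟪u, Y ω⟫ * ⟪v, Y ω⟫)) P := by
  refine (hWY.norm.const_mul (‖u‖ * ‖v‖)).mono'
    (hW.mul (hY.const_inner.mul hY.const_inner)) (.of_forall fun ω ↦ ?_)
  calc ‖W ω * (⟪u, Y ω⟫ * ⟪v, Y ω⟫)‖ ≤ ‖W ω‖ * ((‖u‖ * ‖Y ω‖) * (‖v‖ * ‖Y ω‖)) := by
        rw [norm_mul, norm_mul]; gcongr <;> exact norm_inner_le_norm _ _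
    _ = ‖u‖ * ‖v‖ * ‖W ω * ‖Y ω‖ ^ 2‖ := by simp only [norm_mul, norm_pow, norm_norm]; ring

end Independence

section StdGaussian

variable {E : Type*} [NormedAddCommGroup E] [InnerProductSpace ℝ E] [FiniteDimensional ℝ E]
  [MeasurableSpace E] [BorelSpace E]

lemma memLp_two_inner_stdGaussian (u : E) : MemLp (fun x ↦ ⟪u, x⟫) 2 (stdGaussian E) :=
  IsGaussian.memLp_two_id.const_inner u

lemma integral_inner_stdGaussian (u : E) : ∫ x, ⟪u, x⟫ ∂(stdGaussian E) = 0 :=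
  integral_strongDual_stdGaussian (innerSL ℝ u)

lemma covariance_inner_inner_stdGaussian (u v : E) :
    cov[fun x ↦ ⟪u, x⟫, fun x ↦ ⟪v, x⟫; stdGaussian E] = ⟪u, v⟫ := by
  rw [← covarianceBilin_apply_eq_cov IsGaussian.memLp_two_id, covarianceBilin_stdGaussian,
    innerSL_apply_apply]

lemma integral_inner_mul_inner_stdGaussian (u v : E) :
    ∫ x, ⟪u, x⟫ * ⟪v, x⟫ ∂(stdGaussian E) = ⟪u, v⟫ := by
  simpa [covariance, integral_inner_stdGaussian] using covariance_inner_inner_stdGaussian u v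

lemma measurePreserving_inner_stdGaussian {s : E} (hs : ‖s‖ = 1) :
    MeasurePreserving (fun x ↦ ⟪s, x⟫) (stdGaussian E) (gaussianReal 0 1) where
  measurable := by fun_prop
  map_eq := by
    have hlaw : HasGaussianLaw (fun x ↦ ⟪s, x⟫) (stdGaussian E) :=
      IsGaussian.hasGaussianLaw_id.map (innerSL ℝ s)
    rw [hlaw.map_eq_gaussianReal, integral_inner_stdGaussian, ← covariance_self hlaw.aemeasurable,
      covariance_inner_inner_stdGaussian, real_inner_self_eq_norm_sq, hs]
    simp

lemma indepFun_starProjection_orthogonal_stdGaussian (K : Submodule ℝ E) :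
    IndepFun K.starProjection Kᗮ.starProjection (stdGaussian E) := by
  have hlaw : HasGaussianLaw (fun x ↦ (K.starProjection x, Kᗮ.starProjection x)) (stdGaussian E) :=
    IsGaussian.hasGaussianLaw_id.map (K.starProjection.prod Kᗮ.starProjection)
  refine hlaw.indepFun_of_covariance_inner fun u v ↦ ?_
  simp only [← inner_starProjection_left_eq_right K u, ← inner_starProjection_left_eq_right Kᗮ v,
    covariance_inner_inner_stdGaussian]
  exact inner_right_of_mem_orthogonal (starProjection_apply_mem K u) (starProjection_apply_mem Kᗮ v)

theorem integral_comp_starProjection_mul_inner_mul_inner_stdGaussian (K : Submodule ℝ E)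
    {f : E → ℝ} (hf : Integrable f ((stdGaussian E).map K.starProjection))
    (hf_sq : Integrable (fun x ↦ f x * ‖x‖ ^ 2) ((stdGaussian E).map K.starProjection)) (u v : E) :
    ∫ x, f (K.starProjection x) * (⟪u, x⟫ * ⟪v, x⟫) ∂(stdGaussian E) =
      ∫ x, f (K.starProjection x) * (⟪u, K.starProjection x⟫ * ⟪v, K.starProjection x⟫)
          ∂(stdGaussian E) +
        (∫ x, f (K.starProjection x) ∂(stdGaussian E)) * ⟪u, Kᗮ.starProjection v⟫ := by
  have hproj : Measurable K.starProjection := K.starProjection.measurable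
  have hindep : IndepFun
      (fun x ↦ (f (K.starProjection x), ⟪u, K.starProjection x⟫, ⟪v, K.starProjection x⟫))
      (fun x ↦ (⟪u, Kᗮ.starProjection x⟫, ⟪v, Kᗮ.starProjection x⟫)) (stdGaussian E) :=
    (indepFun_starProjection_orthogonal_stdGaussian K).comp₀
      (φ := fun y ↦ (f y, ⟪u, y⟫, ⟪v, y⟫)) (ψ := fun y ↦ (⟪u, y⟫, ⟪v, y⟫))
      (by fun_prop) (by fun_prop) (hf.aemeasurable.prodMk (by fun_prop)) (by fun_prop)
  have hcov : ∫ x, ⟪u, Kᗮ.starProjection x⟫ * ⟪v, Kᗮ.starProjection x⟫ ∂(stdGaussian E) =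
      ⟪u, Kᗮ.starProjection v⟫ := by
    simp only [← inner_starProjection_left_eq_right Kᗮ u,
      ← inner_starProjection_left_eq_right Kᗮ v, integral_inner_mul_inner_stdGaussian]
    rw [← inner_starProjection_left_eq_right,
      starProjection_eq_self_iff.2 (starProjection_apply_mem Kᗮ u)]
  have hsplit (w x : E) : ⟪w, x⟫ = ⟪w, K.starProjection x⟫ + ⟪w, Kᗮ.starProjection x⟫ := by
    rw [← inner_add_right, starProjection_add_starProjection_orthogonal]
  have hresidual_memLp (w : E) :
      MemLp (fun x ↦ ⟪w, Kᗮ.starProjection x⟫) 2 (stdGaussian E) := by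
    simpa only [inner_starProjection_left_eq_right] using
      memLp_two_inner_stdGaussian (Kᗮ.starProjection w)
  have hresidual_centred (w : E) : ∫ x, ⟪w, Kᗮ.starProjection x⟫ ∂(stdGaussian E) = 0 := by
    simpa only [inner_starProjection_left_eq_right] using
      integral_inner_stdGaussian (Kᗮ.starProjection w)
  have hweighted (w : E) := integrable_mul_inner_of_integrable_mul_norm_sq
    aestronglyMeasurable_id hf hf_sq w
  have hweighted_sq := integrable_mul_inner_mul_inner_of_integrable_mul_norm_sq
    aestronglyMeasurable_id hf.1 hf_sq u v
  conv_lhs => enter [2, x]; rw [hsplit u x, hsplit v x]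
  rw [integral_mul_add_mul_add_of_indepFun hindep (hf.comp_measurable hproj)
    ((hweighted u).comp_measurable hproj) ((hweighted v).comp_measurable hproj)
    (hweighted_sq.comp_measurable hproj) ((hresidual_memLp u).integrable one_le_two)
    ((hresidual_memLp v).integrable one_le_two)
    ((hresidual_memLp u).integrable_mul (hresidual_memLp v))
    (hresidual_centred u) (hresidual_centred v), hcov]

theorem integral_comp_inner_mul_inner_mul_inner_stdGaussian {s : E} (hs : ‖s‖ = 1) {h : ℝ → ℝ}
    (hh : Integrable h (gaussianReal 0 1))
    (hh_sq : Integrable (fun g ↦ h g * g ^ 2) (gaussianReal 0 1)) (u v : E) :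
    ∫ x, h ⟪s, x⟫ * (⟪u, x⟫ * ⟪v, x⟫) ∂(stdGaussian E) =
      (∫ g, h g * g ^ 2 ∂(gaussianReal 0 1)) * (⟪s, u⟫ * ⟪s, v⟫) +
        (∫ g, h g ∂(gaussianReal 0 1)) * (⟪u, v⟫ - ⟪s, u⟫ * ⟪s, v⟫) := by
  have hproj (x : E) : (ℝ ∙ s).starProjection x = ⟪s, x⟫ • s := starProjection_unit_singleton ℝ hs x
  have hinner_proj (x : E) : ⟪s, (ℝ ∙ s).starProjection x⟫ = ⟪s, x⟫ := by
    rw [hproj, real_inner_smul_right, real_inner_self_eq_norm_sq, hs, one_pow, mul_one]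
  have hlaw := measurePreserving_inner_stdGaussian hs
  have hlaw_proj : MeasurePreserving (fun x ↦ ⟪s, x⟫)
      ((stdGaussian E).map (ℝ ∙ s).starProjection) (gaussianReal 0 1) := by
    refine ⟨by fun_prop, ?_⟩
    rw [Measure.map_map (by fun_prop) (by fun_prop), ← hlaw.map_eq]
    simp only [Function.comp_def, hinner_proj]
  have hnorm_proj (x : E) : ‖(ℝ ∙ s).starProjection x‖ ^ 2 = ⟪s, x⟫ ^ 2 := by
    rw [hproj, norm_smul, hs, mul_one, Real.norm_eq_abs, sq_abs]
  have hf : Integrable (fun x ↦ h ⟪s, x⟫) ((stdGaussian E).map (ℝ ∙ s).starProjection) :=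
    hlaw_proj.integrable_comp_of_integrable hh
  have hf_sq : Integrable (fun x ↦ h ⟪s, x⟫ * ‖x‖ ^ 2)
      ((stdGaussian E).map (ℝ ∙ s).starProjection) := by
    refine (integrable_map_measure (hf.1.fun_mul (by fun_prop)) (by fun_prop)).2 ?_
    simpa only [Function.comp_def, hinner_proj, hnorm_proj] using
      hlaw.integrable_comp_of_integrable hh_sq
  have hsplit := integral_comp_starProjection_mul_inner_mul_inner_stdGaussian (ℝ ∙ s) hf hf_sq u v
  have hparallel (x : E) : h ⟪s, x⟫ * (⟪u, ⟪s, x⟫ • s⟫ * ⟪v, ⟪s, x⟫ • s⟫) =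
      h ⟪s, x⟫ * ⟪s, x⟫ ^ 2 * (⟪s, u⟫ * ⟪s, v⟫) := by
    simp only [real_inner_smul_right, real_inner_comm s]
    ring
  have hresidual : ⟪u, (ℝ ∙ s)ᗮ.starProjection v⟫ = ⟪u, v⟫ - ⟪s, u⟫ * ⟪s, v⟫ := by
    rw [starProjection_orthogonal_val, inner_sub_right, hproj, real_inner_smul_right,
      real_inner_comm s u, mul_comm ⟪s, v⟫]
  simp only [hinner_proj] at hsplit
  simp only [hproj, hparallel, integral_mul_const, hresidual] at hsplit
  rwa [← hlaw.map_eq, integral_map hlaw.aemeasurable (hlaw.map_eq ▸ hh_sq.1),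
    integral_map hlaw.aemeasurable (hlaw.map_eq ▸ hh.1)]

end StdGaussian

section PiGauss

lemma norm_toLp_eq_l2norm {d : ℕ} (v : Fin d → ℝ) : ‖toLp 2 v‖ = l2norm v := by
  simp [EuclideanSpace.norm_eq, l2norm]

lemma integral_comp_toLp_piGauss {n : ℕ} (f : EuclideanSpace ℝ (Fin n) → ℝ) :
    ∫ a, f (toLp 2 a) ∂(piGauss n) = ∫ x, f x ∂(stdGaussian (EuclideanSpace ℝ (Fin n))) := by
  rw [← map_pi_eq_stdGaussian]
  exact ((MeasurableEquiv.toLp 2 (Fin n → ℝ)).measurableEmbedding.integral_map f).symm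

theorem stmt_14_general {n : ℕ} {s : Fin n → ℝ} (hs : l2norm s = 1) {h : ℝ → ℝ}
    (hh : Integrable h (gaussianReal 0 1))
    (hh_sq : Integrable (fun g ↦ h g * g ^ 2) (gaussianReal 0 1)) (i j : Fin n) :
    ∫ a, h (a ⬝ᵥ s) * (a i * a j) ∂(piGauss n) =
      (∫ g, h g * g ^ 2 ∂(gaussianReal 0 1)) * (s i * s j) +
        (∫ g, h g ∂(gaussianReal 0 1)) * ((if i = j then (1 : ℝ) else 0) - s i * s j) := by
  have hformula := integral_comp_inner_mul_inner_mul_inner_stdGaussian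
    ((norm_toLp_eq_l2norm s).trans hs) hh hh_sq
    (EuclideanSpace.single i 1) (EuclideanSpace.single j 1)
  rw [← integral_comp_toLp_piGauss] at hformula
  simpa [EuclideanSpace.inner_eq_star_dotProduct, Pi.single_apply] using hformula

end PiGauss

/-- Let `a ~ N(0, I_n)`, let `s̄` be a unit vector and `g = ⟨a, s̄⟩`. Then for every
bounded measurable `h : ℝ → ℝ` and all `i, j`:
`E[h(g) a_i a_j] = E[h(g) g²] s̄_i s̄_j + E[h(g)] (δ_{ij} − s̄_i s̄_j)`. -/
theorem stmt_14 (n : ℕ) (sb : Fin n → ℝ) (hsb : l2norm sb = 1)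
    (h : ℝ → ℝ) (hmeas : Measurable h) (hbdd : ∃ M, ∀ t, |h t| ≤ M) (i j : Fin n) :
    ∫ a : Fin n → ℝ, h (a ⬝ᵥ sb) * (a i * a j) ∂(piGauss n) =
      (∫ g, h g * g ^ 2 ∂(gaussianReal 0 1)) * (sb i * sb j) +
      (∫ g, h g ∂(gaussianReal 0 1)) * ((if i = j then (1 : ℝ) else 0) - sb i * sb j) := by
  obtain ⟨M, hM⟩ := hbdd
  have hM_ae : ∀ᵐ t ∂(gaussianReal 0 1), ‖h t‖ ≤ M := .of_forall hM
  exact stmt_14_general hsb (.of_bound hmeas.aestronglyMeasurable M hM_ae)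
    ((memLp_id_gaussianReal 2).integrable_sq.bdd_mul hmeas.aestronglyMeasurable hM_ae) i j
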